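/- arXiv:2411.14305 — 3 statements merged into one kernel-verified Lean document; each statement's English description precedes it below -/
import Mathlib

section
/- Under the constraint system together with the bounded-covariance assumption, the squared distance between the two empirical means satisfies ‖μ − μ*‖² ≤ 8ε/(1 − 2ε)². -/
open Finset MeasureTheory
open scoped BigOperators InnerProductSpace

/-- The deviations of finitely many vectors from their mean, paired with a fixed vector, sum to
zero. -/
lemma sum_inner_sub_mean_eq_zero {E : Type*} [NormedAddCommGroup E] [InnerProductSpace ℝ E]
    {n : ℕ} (hn : n ≠ 0) (x : Fin n → E) (v : E) :
    ∑ i, ⟪x i - (1 / (n : ℝ)) • ∑ j, x j, v⟫_ℝ = 0 := by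
  have hn' : (n : ℝ) ≠ 0 := by exact_mod_cast hn
  rw [← sum_inner, Finset.sum_sub_distrib, Finset.sum_const, Finset.card_univ, Fintype.card_fin,
    ← Nat.cast_smul_eq_nsmul ℝ, smul_smul, mul_one_div_cancel hn', one_smul, sub_self,
    inner_zero_left]

/-- If two centred families `a`, `b` differ by the constant `-D` wherever the `0/1` weight `r` is
nonzero, then `D` is controlled by the second moments of `a` and `b` and the total mass of
`1 - r`. -/
lemma sq_mul_sum_weight_le {ι : Type*} [Fintype ι] (a b r : ι → ℝ) (D : ℝ)
    (ha : ∑ i, a i = 0) (hb : ∑ i, b i = 0) (hr : ∀ i, r i ^ 2 = r i)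
    (hab : ∀ i, r i * (a i - b i + D) = 0) :
    (D * ∑ i, r i) ^ 2 ≤ (∑ i, (1 - r i)) * (2 * (∑ i, a i ^ 2 + ∑ i, b i ^ 2)) := by
  have hS : ∑ i, (1 - r i) * (a i - b i) = D * ∑ i, r i := by
    have h : ∀ i, (1 - r i) * (a i - b i) = a i - b i + D * r i := fun i => by
      linear_combination -hab i
    simp_rw [h]
    rw [Finset.sum_add_distrib, Finset.sum_sub_distrib, ha, hb, Finset.mul_sum]
    ring
  have hsq : ∑ i, (1 - r i) ^ 2 = ∑ i, (1 - r i) :=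
    Finset.sum_congr rfl fun i _ => by linear_combination hr i
  rw [← hS]
  refine (Finset.sum_mul_sq_le_sq_mul_sq _ _ _).trans ?_
  rw [hsq]
  refine mul_le_mul_of_nonneg_left ?_ (hsq ▸ Finset.sum_nonneg fun i _ => sq_nonneg _)
  rw [← Finset.sum_add_distrib, Finset.mul_sum]
  exact Finset.sum_le_sum fun i _ => by nlinarith [sq_nonneg (a i + b i)]

/-- Theorem D.1 of the paper: optimal breakdown point for the bounded covariance case,
`‖μ − μ*‖² ≤ 8ε/(1 − 2ε)²`. -/
theorem bounded_covariance_optimal_breakdown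
    (n d : ℕ) (hn : 1 ≤ n) (hd : 1 ≤ d)
    (ε : ℝ) (hε0 : 0 ≤ ε) (hε : ε < 1 / 2)
(z x xs : Fin n → EuclideanSpace ℝ (Fin d)) (w ws : Fin n → ℝ)
    (hw : ∀ i, w i ^ 2 = w i)
    (hwz : ∀ i, w i • (z i - x i) = 0)
    (hws : ∀ i, ws i ^ 2 = ws i)
    (hwsz : ∀ i, ws i • (z i - xs i) = 0)
    (hwsum : 1 - ε ≤ (1 / (n : ℝ)) * ∑ i, w i)
    (hwssum : 1 - ε ≤ (1 / (n : ℝ)) * ∑ i, ws i)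
    (μ μs : EuclideanSpace ℝ (Fin d))
    (hμ : μ = (1 / (n : ℝ)) • ∑ i, x i)
    (hμs : μs = (1 / (n : ℝ)) • ∑ i, xs i)
    (hcov : ∀ v : EuclideanSpace ℝ (Fin d),
      (1 / (n : ℝ)) * ∑ i, ⟪x i - μ, v⟫_ℝ ^ 2 ≤ ‖v‖ ^ 2)
    (hcovs : ∀ v : EuclideanSpace ℝ (Fin d),
      (1 / (n : ℝ)) * ∑ i, ⟪xs i - μs, v⟫_ℝ ^ 2 ≤ ‖v‖ ^ 2) :
    ‖μ - μs‖ ^ 2 ≤ 8 * ε / (1 - 2 * ε) ^ 2 := by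
  have hn0 : (0 : ℝ) < n := by exact_mod_cast hn
  set v := μ - μs with hv
  set D := ‖v‖ ^ 2 with hD
  have h01 : ∀ t : ℝ, t ^ 2 = t → t = 0 ∨ t = 1 := fun t ht => by
    have h : t * (t - 1) = 0 := by linear_combination ht
    rcases mul_eq_zero.1 h with h | h
    · exact Or.inl h
    · exact Or.inr (by linarith)
  have hab : ∀ i, (w i * ws i) * (⟪x i - μ, v⟫_ℝ - ⟪xs i - μs, v⟫_ℝ + D) = 0 := fun i => by
    have hdiff : ⟪x i - μ, v⟫_ℝ - ⟪xs i - μs, v⟫_ℝ + D = ⟪x i - xs i, v⟫_ℝ := by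
      rw [hD, ← real_inner_self_eq_norm_sq, ← inner_sub_left, ← inner_add_left]
      congr 1
      rw [hv]
      abel
    have hzero : (w i * ws i) • (x i - xs i) = 0 := by
      have h : (w i * ws i) • (x i - xs i)
          = w i • ws i • (z i - xs i) - ws i • w i • (z i - x i) := by module
      rw [h, hwz, hwsz, smul_zero, smul_zero, sub_zero]
    rw [hdiff, ← real_inner_smul_left, hzero, inner_zero_left]
  have hmain := sq_mul_sum_weight_le (fun i => ⟪x i - μ, v⟫_ℝ) (fun i => ⟪xs i - μs, v⟫_ℝ)
    (fun i => w i * ws i) D (by rw [hμ]; exact sum_inner_sub_mean_eq_zero (by omega) x v)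
    (by rw [hμs]; exact sum_inner_sub_mean_eq_zero (by omega) xs v)
    (fun i => by rw [mul_pow, hw, hws]) hab
  have hcount : n * (1 - 2 * ε) ≤ ∑ i, w i * ws i := by
    rw [one_div_mul_eq_div, le_div_iff₀ hn0] at hwsum hwssum
    have h : ∑ i, (w i + ws i - 1) ≤ ∑ i, w i * ws i := Finset.sum_le_sum fun i _ => by
      rcases h01 _ (hw i) with h | h <;> rcases h01 _ (hws i) with h' | h' <;> rw [h, h'] <;>
        norm_num
    rw [Finset.sum_sub_distrib, Finset.sum_add_distrib, Finset.sum_const, Finset.card_univ,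
      Fintype.card_fin, nsmul_one] at h
    linarith
  have hcomp : ∑ i, (1 - w i * ws i) = n - ∑ i, w i * ws i := by simp
  have hA := hcov v
  have hB := hcovs v
  rw [one_div_mul_eq_div, div_le_iff₀ hn0] at hA hB
  have hD0 : 0 ≤ D := sq_nonneg _
  have hε' : 0 < 1 - 2 * ε := by linarith
  have hbound : (D * (n * (1 - 2 * ε))) ^ 2 ≤ (2 * ε * n) * (2 * (D * n + D * n)) := by
    refine le_trans (pow_le_pow_left₀ (by positivity) ?_ 2) (hmain.trans ?_)
    · exact mul_le_mul_of_nonneg_left hcount hD0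
    · refine mul_le_mul ?_ ?_ (by positivity) (by positivity)
      · rw [hcomp]
        linarith
      · linarith
  rw [le_div_iff₀ (by positivity)]
  rcases hD0.eq_or_lt with h | h
  · rw [← h]
    linarith
  · refine le_of_mul_le_mul_left ?_ (show 0 < D * (n : ℝ) ^ 2 by positivity)
    linarith
end

section
/- Let k ≥ 2 be an even integer. For every ε ∈ (0, 1/2) there exist Borel probability distributions D1 and D2 on ℝ such that: (1) d_TV(D1, D2) ≤ 2ε; (2) D1 and D2 each have finite mean, and their k-th central moments satisfy E_{X∼Dj}[(X − μj)^k] ≤ k^{k/2} for j ∈ {1,2}, where μj is the mean of Dj; (3) |μ1 − μ2| ≥ √k · ε^{1−1/k} · (1 − 2ε)^{−1/k}. -/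
open MeasureTheory

/-- The total variation distance between two measures:
`d_TV(P,Q) = sup_A |P(A) − Q(A)|` over measurable sets `A`. -/
noncomputable def tvDist {α : Type*} [MeasurableSpace α]
    (P Q : MeasureTheory.Measure α) : ℝ :=
  ⨆ A : {s : Set α // MeasurableSet s}, |(P A.1).toReal - (Q A.1).toReal|

/-- The law on `ℝ` that puts mass `1 - p` at `0` and mass `p` at `a`. -/
noncomputable def twoPoint (p a : ℝ) : Measure ℝ :=
  ENNReal.ofReal (1 - p) • Measure.dirac 0 + ENNReal.ofReal p • Measure.dirac a

lemma isProbabilityMeasure_twoPoint {p : ℝ} (a : ℝ) (hp0 : 0 ≤ p) (hp1 : p ≤ 1) :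
    IsProbabilityMeasure (twoPoint p a) := by
  constructor
  simp [twoPoint, ← ENNReal.ofReal_add (sub_nonneg.2 hp1) hp0]

lemma integrable_twoPoint (p a : ℝ) (f : ℝ → ℝ) : Integrable f (twoPoint p a) :=
  ((integrable_dirac (by simp)).smul_measure ENNReal.ofReal_ne_top).add_measure
    ((integrable_dirac (by simp)).smul_measure ENNReal.ofReal_ne_top)

lemma integral_twoPoint {p : ℝ} (a : ℝ) (hp0 : 0 ≤ p) (hp1 : p ≤ 1) (f : ℝ → ℝ) :
    ∫ x, f x ∂(twoPoint p a) = (1 - p) * f 0 + p * f a := by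
  rw [twoPoint, integral_add_measure
    ((integrable_dirac (by simp)).smul_measure ENNReal.ofReal_ne_top)
    ((integrable_dirac (by simp)).smul_measure ENNReal.ofReal_ne_top)]
  simp [integral_smul_measure, hp0, hp1]

lemma tvDist_dirac_twoPoint_le {p : ℝ} (a : ℝ) (hp0 : 0 ≤ p) (hp1 : p ≤ 1) :
    tvDist (Measure.dirac 0) (twoPoint p a) ≤ p := by
  refine ciSup_le fun ⟨A, hA⟩ => ?_
  have h : (twoPoint p a A).toReal =
      (1 - p) * A.indicator 1 (0 : ℝ) + p * A.indicator 1 a := by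
    by_cases h0 : (0 : ℝ) ∈ A <;> by_cases h1 : a ∈ A <;>
      simp [twoPoint, hA, h0, h1, hp0, hp1, ← ENNReal.ofReal_add]
  rw [h]
  by_cases h0 : (0 : ℝ) ∈ A <;> by_cases h1 : a ∈ A <;>
    simp [h0, h1, hp0, abs_of_nonneg]

lemma centralMoment_twoPoint_le {p : ℝ} (a : ℝ) (hp0 : 0 ≤ p) (hp1 : p ≤ 1)
    {k : ℕ} (hk : 2 ≤ k) (hkeven : Even k) :
    (1 - p) * (0 - p * a) ^ k + p * (a - p * a) ^ k ≤ a ^ k * (p * (1 - p)) := by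
  obtain ⟨m, rfl⟩ : ∃ m, k = m + 2 := ⟨k - 2, by omega⟩
  have ha : 0 ≤ a ^ (m + 2) := hkeven.pow_nonneg a
  have hq0 : 0 ≤ 1 - p := sub_nonneg.2 hp1
  have h1 : p ^ (m + 1) ≤ p := pow_le_of_le_one hp0 hp1 (by omega)
  have h2 : (1 - p) ^ (m + 1) ≤ 1 - p := pow_le_of_le_one hq0 (by linarith) (by omega)
  calc (1 - p) * (0 - p * a) ^ (m + 2) + p * (a - p * a) ^ (m + 2)
      = a ^ (m + 2) * (p * (1 - p)) * (p ^ (m + 1) + (1 - p) ^ (m + 1)) := by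
        rw [zero_sub, hkeven.neg_pow, show a - p * a = (1 - p) * a by ring, mul_pow, mul_pow]
        ring
    _ ≤ a ^ (m + 2) * (p * (1 - p)) * 1 := by
        gcongr
        linarith
    _ = _ := mul_one _

/-- Lemma 1.5 of the paper: the information-theoretic lower bound for distributions with
bounded `k`-th moments. For every `ε ∈ (0, 1/2)` there are two one-dimensional
distributions with total variation distance at most `2ε`, `k`-th central moments at most
`k^(k/2)`, and means at least `√k · ε^(1−1/k) · (1 − 2ε)^(−1/k)` apart. -/
theorem lower_bound_bounded_moments (k : ℕ) (hk : 2 ≤ k) (hkeven : Even k)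
    (ε : ℝ) (hε0 : 0 < ε) (hε : ε < 1 / 2) :
    ∃ D1 D2 : Measure ℝ, IsProbabilityMeasure D1 ∧ IsProbabilityMeasure D2 ∧
      tvDist D1 D2 ≤ 2 * ε ∧
      Integrable (id : ℝ → ℝ) D1 ∧ Integrable (id : ℝ → ℝ) D2 ∧
      Integrable (fun x => (x - ∫ y, y ∂D1) ^ k) D1 ∧
      Integrable (fun x => (x - ∫ y, y ∂D2) ^ k) D2 ∧
      (∫ x, (x - ∫ y, y ∂D1) ^ k ∂D1) ≤ (k : ℝ) ^ ((k : ℝ) / 2) ∧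
      (∫ x, (x - ∫ y, y ∂D2) ^ k ∂D2) ≤ (k : ℝ) ^ ((k : ℝ) / 2) ∧
      Real.sqrt k * ε ^ (1 - 1 / (k : ℝ)) * (1 - 2 * ε) ^ (-(1 / (k : ℝ))) ≤
        |(∫ y, y ∂D1) - ∫ y, y ∂D2| := by
  have hk0 : (k : ℝ) ≠ 0 := by positivity
  have hp0 : 0 < 2 * ε := by positivity
  have hq0 : 0 < 1 - 2 * ε := by linarith
  have hp1 : 2 * ε ≤ 1 := by linarith
  set a : ℝ := Real.sqrt k * (2 * ε * (1 - 2 * ε)) ^ (-(1 / (k : ℝ))) with ha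
  have ha0 : 0 ≤ a := by positivity
  have hak : a ^ k * (2 * ε * (1 - 2 * ε)) = (k : ℝ) ^ ((k : ℝ) / 2) := by
    have hpq : 0 < 2 * ε * (1 - 2 * ε) := mul_pos hp0 hq0
    rw [ha, mul_pow, Real.sqrt_eq_rpow, ← Real.rpow_mul_natCast (by positivity),
      ← Real.rpow_mul_natCast hpq.le, neg_mul, one_div_mul_cancel hk0, Real.rpow_neg_one,
      mul_assoc, inv_mul_cancel₀ hpq.ne', mul_one]
    ring_nf
  have hmean : ∫ y, y ∂(twoPoint (2 * ε) a) = 2 * ε * a := by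
    simpa using integral_twoPoint a hp0.le hp1 fun y => y
  refine ⟨Measure.dirac 0, twoPoint (2 * ε) a, inferInstance,
    isProbabilityMeasure_twoPoint a hp0.le hp1, tvDist_dirac_twoPoint_le a hp0.le hp1,
    integrable_dirac (by simp), integrable_twoPoint _ _ _,
    integrable_dirac (by simp), integrable_twoPoint _ _ _, ?_, ?_, ?_⟩
  · simp only [integral_dirac, sub_self]
    rw [zero_pow (by omega)]
    positivity
  · rw [hmean, integral_twoPoint a hp0.le hp1, ← hak]
    exact centralMoment_twoPoint_le a hp0.le hp1 hk hkeven
  · rw [hmean, integral_dirac, zero_sub, abs_neg, abs_of_nonneg (by positivity)]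
    have hexp : 0 ≤ 1 - 1 / (k : ℝ) := by
      rw [sub_nonneg, div_le_one (by positivity)]
      exact_mod_cast (by omega : 1 ≤ k)
    calc Real.sqrt k * ε ^ (1 - 1 / (k : ℝ)) * (1 - 2 * ε) ^ (-(1 / (k : ℝ)))
        ≤ Real.sqrt k * (2 * ε) ^ (1 - 1 / (k : ℝ)) * (1 - 2 * ε) ^ (-(1 / (k : ℝ))) := by
          gcongr
          linarith
      _ = 2 * ε * a := by
          rw [ha, Real.mul_rpow hp0.le hq0.le, sub_eq_add_neg, Real.rpow_add hp0, Real.rpow_one]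
          ring
end

section
/- For every ε ∈ (0, 1/2) there exist Borel probability distributions D1 and D2 on ℝ such that: (1) D1 = N(0,1); (2) d_TV(D1, D2) ≤ ε; (3) D2 has mean μ2 = ε·√(log(1/ε)) and variance at most 1 + ε·log(1/ε); hence the means of D1 and D2 differ by ε·√(log(1/ε)). -/
open MeasureTheory ProbabilityTheory

/-- The mixture `(1 - ε) • P + ε • Q` of two measures. -/
noncomputable def mixture {α : Type*} [MeasurableSpace α] (ε : ℝ) (P Q : Measure α) : Measure α :=
  ENNReal.ofReal (1 - ε) • P + ENNReal.ofReal ε • Q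

section Mixture

variable {α : Type*} [MeasurableSpace α] {ε : ℝ} {P Q : Measure α}

theorem isProbabilityMeasure_mixture [IsProbabilityMeasure P] [IsProbabilityMeasure Q]
    (h0 : 0 ≤ ε) (h1 : ε ≤ 1) : IsProbabilityMeasure (mixture ε P Q) := by
  constructor
  simp only [mixture, Measure.add_apply, Measure.smul_apply, measure_univ, smul_eq_mul, mul_one]
  rw [← ENNReal.ofReal_add (sub_nonneg.2 h1) h0]
  simp

theorem integrable_mixture {f : α → ℝ} (hP : Integrable f P) (hQ : Integrable f Q) :
    Integrable f (mixture ε P Q) :=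
  (hP.smul_measure ENNReal.ofReal_ne_top).add_measure (hQ.smul_measure ENNReal.ofReal_ne_top)

theorem integral_mixture (h0 : 0 ≤ ε) (h1 : ε ≤ 1) {f : α → ℝ}
    (hP : Integrable f P) (hQ : Integrable f Q) :
    ∫ x, f x ∂(mixture ε P Q) = (1 - ε) * ∫ x, f x ∂P + ε * ∫ x, f x ∂Q := by
  rw [mixture, integral_add_measure (hP.smul_measure ENNReal.ofReal_ne_top)
    (hQ.smul_measure ENNReal.ofReal_ne_top), integral_smul_measure, integral_smul_measure,
    ENNReal.toReal_ofReal (sub_nonneg.2 h1), ENNReal.toReal_ofReal h0, smul_eq_mul, smul_eq_mul]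

theorem tvDist_mixture_le [IsProbabilityMeasure P] [IsProbabilityMeasure Q]
    (h0 : 0 ≤ ε) (h1 : ε ≤ 1) : tvDist P (mixture ε P Q) ≤ ε := by
  refine Real.iSup_le (fun A => ?_) h0
  have hmix : (mixture ε P Q A.1).toReal = (1 - ε) * (P A.1).toReal + ε * (Q A.1).toReal := by
    simp only [mixture, Measure.add_apply, Measure.smul_apply, smul_eq_mul]
    rw [ENNReal.toReal_add (by finiteness) (by finiteness), ENNReal.toReal_mul,
      ENNReal.toReal_mul, ENNReal.toReal_ofReal (sub_nonneg.2 h1), ENNReal.toReal_ofReal h0]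
  have hP : (P A.1).toReal ≤ 1 := measureReal_le_one
  have hQ : (Q A.1).toReal ≤ 1 := measureReal_le_one
  have hP0 : 0 ≤ (P A.1).toReal := ENNReal.toReal_nonneg
  have hQ0 : 0 ≤ (Q A.1).toReal := ENNReal.toReal_nonneg
  rw [hmix, abs_le]
  constructor <;> nlinarith

end Mixture

theorem integrable_sub_sq_gaussianReal (μ : ℝ) (v : NNReal) (m : ℝ) :
    Integrable (fun x => (x - m) ^ 2) (gaussianReal μ v) :=
  ((memLp_id_gaussianReal 2).sub (memLp_const m)).integrable_sq

theorem integral_sub_sq_gaussianReal (μ : ℝ) (v : NNReal) (m : ℝ) :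
    ∫ x, (x - m) ^ 2 ∂(gaussianReal μ v) = v + (μ - m) ^ 2 := by
  have hid : Integrable (fun x : ℝ => x) (gaussianReal μ v) :=
    (memLp_id_gaussianReal 1).integrable le_rfl
  have hvar : ∫ x, (x - μ) ^ 2 ∂(gaussianReal μ v) = v := by
    have h := variance_fun_id_gaussianReal (μ := μ) (v := v)
    rwa [variance_eq_integral aemeasurable_id', integral_id_gaussianReal] at h
  have hexpand : ∀ x : ℝ, (x - m) ^ 2 = (x - μ) ^ 2 + (2 * (μ - m) * x + (m ^ 2 - μ ^ 2)) :=
    fun x => by ring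
  have hlin : Integrable (fun x : ℝ => 2 * (μ - m) * x + (m ^ 2 - μ ^ 2)) (gaussianReal μ v) :=
    (hid.const_mul _).add (integrable_const _)
  rw [integral_congr_ae (.of_forall hexpand)]
  rw [integral_add (integrable_sub_sq_gaussianReal μ v μ) hlin,
    integral_add (hid.const_mul _) (integrable_const _), hvar, integral_const_mul,
    integral_id_gaussianReal, integral_const, probReal_univ, one_smul]
  ring

/-- Lemma E.2 of the paper (tightness of Kothari–Manohar–Zhang): for `ε ∈ (0, 1/2)` there is
a distribution `D2` on `ℝ` with `d_TV(N(0,1), D2) ≤ ε`, mean exactly `ε·√(log(1/ε))`, and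
variance at most `1 + ε·log(1/ε)`. -/
theorem lower_bound_gaussian_vs_bounded_covariance_small_eps
    (ε : ℝ) (hε0 : 0 < ε) (hε : ε < 1 / 2) :
    ∃ D2 : Measure ℝ, IsProbabilityMeasure D2 ∧
      tvDist (gaussianReal 0 1) D2 ≤ ε ∧
      Integrable (id : ℝ → ℝ) D2 ∧
      (∫ y, y ∂D2) = ε * Real.sqrt (Real.log (1 / ε)) ∧
      Integrable (fun x => (x - ∫ y, y ∂D2) ^ 2) D2 ∧
      (∫ x, (x - ∫ y, y ∂D2) ^ 2 ∂D2) ≤ 1 + ε * Real.log (1 / ε) := by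
  have hε1 : ε ≤ 1 := by linarith
  have hlog : 0 ≤ Real.log (1 / ε) := Real.log_nonneg (by rw [le_div_iff₀ hε0]; linarith)
  set s := Real.sqrt (Real.log (1 / ε))
  have hs2 : s ^ 2 = Real.log (1 / ε) := Real.sq_sqrt hlog
  have hidG : Integrable (fun x : ℝ => x) (gaussianReal 0 1) :=
    (memLp_id_gaussianReal 1).integrable le_rfl
  have hidD : Integrable (fun x : ℝ => x) (Measure.dirac s) := integrable_dirac (by simp)
  have hsqD : ∀ m : ℝ, Integrable (fun x : ℝ => (x - m) ^ 2) (Measure.dirac s) :=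
    fun m => integrable_dirac (by simp)
  have hmean : ∫ y, y ∂(mixture ε (gaussianReal 0 1) (Measure.dirac s)) = ε * s := by
    rw [integral_mixture hε0.le hε1 hidG hidD, integral_id_gaussianReal, integral_dirac]
    ring
  refine ⟨mixture ε (gaussianReal 0 1) (Measure.dirac s),
    isProbabilityMeasure_mixture hε0.le hε1, tvDist_mixture_le hε0.le hε1,
    integrable_mixture hidG hidD, hmean,
    integrable_mixture (integrable_sub_sq_gaussianReal _ _ _) (hsqD _), ?_⟩
  rw [hmean, integral_mixture hε0.le hε1 (integrable_sub_sq_gaussianReal _ _ _) (hsqD _),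
    integral_sub_sq_gaussianReal, integral_dirac, ← hs2, NNReal.coe_one]
  nlinarith [sq_nonneg (ε * s)]
end
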